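/- Let R be a commutative unital ℂ-algebra, c ∈ ℂ nonzero, and let ∂ be the R-derivation of the Laurent polynomial ring R[λ,λ^{-1}] with ∂(λ) = c. Fix an integer m ≥ 1 and for k = 1,…,m define the operator D_k = (-1)^{k(k+1)/2} Σ_{j=0}^{k-1} ((k-1+j)!/(2^j (k-1-j)! j!)) · (-c)^j · λ^{-(k+j)} · ∂^{k-j} on R[λ,λ^{-1}]. Then for p = Σ_{j=0}^N a_j λ^j ∈ R[λ], one has D_k p ∈ R[λ] for all k = 1,…,m if and only if a_j = 0 for all odd j with 1 ≤ j ≤ 2m-1. -/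

import Mathlib

/-!
On monomials, `λ^r ∂^r` multiplies `λ^n` by `c^r n(n-1)⋯(n-r+1)`, so `λ^{2k} D_k` acts on `λ^n` as
a scalar. The coefficients of `D_k` are those of the Bessel polynomials, and their Pascal-type
recurrence collapses this scalar to `± c^k n(n-2)⋯(n-2k+2)`. For `0 ≤ n < 2k` it vanishes when `n`
is even, and it is `± c^k` times a product of odd integers when `n` is odd. Hence the polar part of
`D_k p` vanishes exactly when the odd coefficients of `p` below degree `2k` do.
-/

section

open Finset LaurentPolynomial
open Polynomial (toLaurent)
open scoped Nat Polynomial nonZeroDivisors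

/-- The coefficient `(n + j)! / (2 ^ j * (n - j)! * j !)` of the `n`-th Bessel polynomial, in a form
that is visibly a natural number and that vanishes for `j > n`. At `j = 0` the truncated subtraction
gives `0‼ = 1`, the usual value of `(-1)‼`. -/
def besselCoeff (n j : ℕ) : ℕ := (n + j).choose (2 * j) * (2 * j - 1)‼

theorem besselCoeff_zero_right (n : ℕ) : besselCoeff n 0 = 1 := by simp [besselCoeff]

theorem besselCoeff_eq_zero_of_lt {n j : ℕ} (h : n < j) : besselCoeff n j = 0 := by
  rw [besselCoeff, Nat.choose_eq_zero_of_lt (by omega), zero_mul]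

theorem besselCoeff_succ_succ (n j : ℕ) :
    besselCoeff (n + 1) (j + 1) = besselCoeff n (j + 1) + (n + 1 + j) * besselCoeff n j := by
  have absorption : (n + j + 1).choose (2 * j + 1) * (2 * j + 1) =
      (n + j + 1) * (n + j).choose (2 * j) :=
    (Nat.add_one_mul_choose_eq _ _).symm
  have hodd : (2 * (j + 1) - 1)‼ = (2 * j + 1) * (2 * j - 1)‼ :=
    Nat.doubleFactorial_add_one (2 * j)
  have pascal : (n + 1 + (j + 1)).choose (2 * (j + 1)) =
      (n + j + 1).choose (2 * j + 1) + (n + (j + 1)).choose (2 * (j + 1)) := by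
    rw [show n + 1 + (j + 1) = (n + j + 1) + 1 by ring]
    exact Nat.choose_succ_succ _ _
  simp only [besselCoeff, pascal, hodd]
  linear_combination (2 * j - 1)‼ * absorption

theorem factorial_two_mul (j : ℕ) : (2 * j)! = 2 ^ j * j ! * (2 * j - 1)‼ := by
  cases j with
  | zero => rfl
  | succ j => rw [← Nat.doubleFactorial_two_mul]; exact Nat.factorial_eq_mul_doubleFactorial _

theorem besselCoeff_mul_factorials {n j : ℕ} (h : j ≤ n) :
    besselCoeff n j * (2 ^ j * (n - j)! * j !) = (n + j)! := by
  rw [← Nat.choose_mul_factorial_mul_factorial (show 2 * j ≤ n + j by omega), factorial_two_mul,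
    besselCoeff, show n + j - 2 * j = n - j by omega]
  ring

theorem cast_besselCoeff {K : Type*} [Field K] [CharZero K] {n j : ℕ} (h : j ≤ n) :
    (besselCoeff n j : K) = (n + j)! / (2 ^ j * (n - j)! * j !) := by
  have hne : (2 ^ j * (n - j)! * j ! : K) ≠ 0 := by simp [Nat.factorial_ne_zero]
  rw [eq_div_iff hne]
  exact_mod_cast besselCoeff_mul_factorials h

theorem sum_besselCoeff_mul_descPochhammer_eval {R : Type*} [CommRing R] (x : R) (n : ℕ) :
    ∑ j ∈ range (n + 1), (-1) ^ j * besselCoeff n j * (descPochhammer R (n + 1 - j)).eval x =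
      ∏ l ∈ range (n + 1), (x - 2 * l) := by
  induction n with
  | zero => simp [besselCoeff_zero_right]
  | succ n ih =>
    set P : ℕ → R := fun r ↦ (descPochhammer R r).eval x with hP
    -- With `r = n + 1 - j`, write `x - 2 * (n + 1) = (x - r) - (n + 1 + j)`; the factor `x - r`
    -- raises `P r` to `P (r + 1)`.
    have raise (j) (hj : j ∈ range (n + 1)) : P (n + 1 - j) * (x - 2 * (n + 1 : ℕ)) =
        P (n + 2 - j) - (n + 1 + j) * P (n + 1 - j) := by
      have hj : j ≤ n + 1 := by grind
      simp only [hP]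
      rw [show n + 2 - j = n + 1 - j + 1 by omega, descPochhammer_succ_eval, Nat.cast_sub hj]
      push_cast
      ring
    have shift : ∑ j ∈ range (n + 1), (-1) ^ j * besselCoeff n j * P (n + 2 - j) =
        ∑ j ∈ range (n + 1), (-1) ^ (j + 1) * besselCoeff n (j + 1) * P (n + 1 - j) +
          P (n + 2) := by
      have hextend := sum_range_succ (fun j ↦ (-1) ^ j * besselCoeff n j * P (n + 2 - j)) (n + 1)
      rw [sum_range_succ', besselCoeff_eq_zero_of_lt n.lt_succ_self] at hextend
      simpa [besselCoeff_zero_right] using hextend.symm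
    symm
    calc ∏ l ∈ range (n + 2), (x - 2 * l)
        = ∑ j ∈ range (n + 1),
            (-1) ^ j * besselCoeff n j * (P (n + 1 - j) * (x - 2 * (n + 1 : ℕ))) := by
          rw [prod_range_succ, ← ih, sum_mul]
          simp only [hP, mul_assoc]
      _ = ∑ j ∈ range (n + 1), (-1) ^ j * besselCoeff n j * P (n + 2 - j) -
            ∑ j ∈ range (n + 1), (-1) ^ j * besselCoeff n j * ((n + 1 + j) * P (n + 1 - j)) := by
          rw [← sum_sub_distrib]
          exact sum_congr rfl fun j hj ↦ by rw [raise j hj, mul_sub]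
      _ = ∑ j ∈ range (n + 1), (-1) ^ (j + 1) * besselCoeff (n + 1) (j + 1) * P (n + 1 - j) +
            P (n + 2) := by
          rw [shift, add_sub_right_comm, ← sum_sub_distrib]
          congr! 2 with j
          rw [besselCoeff_succ_succ]
          push_cast
          ring
      _ = ∑ j ∈ range (n + 2), (-1) ^ j * besselCoeff (n + 1) j * P (n + 2 - j) := by
          simp [sum_range_succ' _ (n + 1), besselCoeff_zero_right]

variable {R : Type*} [CommRing R]

theorem coeff_toLaurent_natCast (p : R[X]) (n : ℕ) : (toLaurent p).coeff n = p.coeff n := by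
  rw [coeff_toLaurent]
  exact Finsupp.mapDomain_apply Nat.cast_injective _ _

theorem coeff_toLaurent_of_neg (p : R[X]) {n : ℤ} (hn : n < 0) : (toLaurent p).coeff n = 0 := by
  rw [coeff_toLaurent]
  refine Finsupp.mapDomain_of_notMem_range _ _ ?_
  rintro ⟨i, rfl⟩
  exact absurd hn (Int.natCast_nonneg i).not_gt

theorem exists_toLaurent_eq_iff_forall_coeff_neg {f : R[T;T⁻¹]} :
    (∃ p : R[X], toLaurent p = f) ↔ ∀ n < 0, f.coeff n = 0 := by
  constructor
  · rintro ⟨p, rfl⟩ n hn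
    exact coeff_toLaurent_of_neg p hn
  · intro h
    refine ⟨trunc f, LaurentPolynomial.ext fun n ↦ ?_⟩
    obtain hn | hn := lt_or_ge n 0
    · rw [h n hn, coeff_toLaurent_of_neg _ hn]
    · lift n to ℕ using hn
      exact coeff_toLaurent_natCast _ n

theorem coeff_C_mul_T (a : R) (m n : ℤ) : (C a * T m).coeff n = if m = n then a else 0 := by
  rw [← single_eq_C_mul_T, AddMonoidAlgebra.coeff_single, Finsupp.single_apply]

variable {c : R} {D : Derivation R R[T;T⁻¹] R[T;T⁻¹]}

-- `n ↦ T (-n) * D (T n)`, the logarithmic derivative, is additive, hence fixed by its value at `1`.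
theorem derivation_T (hD : D (T 1) = C c) (n : ℤ) : D (T n) = C (c * n) * T (n - 1) := by
  let logDeriv : ℤ →+ R[T;T⁻¹] := AddMonoidHom.mk' (fun n ↦ T (-n) * D (T n)) fun m n ↦ by
    have cancel (k : ℤ) : (T (-k) * T k : R[T;T⁻¹]) = 1 := by
      rw [← T_add, neg_add_cancel, T_zero]
    simp only [T_add, D.leibniz, smul_eq_mul, neg_add]
    linear_combination T (-n) * D (T n) * cancel m + T (-m) * D (T m) * cancel n
  have hlog : T (-n) * D (T n) = n • (T (-1) * D (T 1)) := by
    have := map_zsmul logDeriv n 1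
    rwa [zsmul_one] at this
  calc D (T n) = T n * (T (-n) * D (T n)) := by
        rw [← mul_assoc, ← T_add, add_neg_cancel, T_zero, one_mul]
    _ = C (c * n) * T (n - 1) := by
        rw [hlog, hD, zsmul_eq_mul, T_sub, map_mul, map_intCast]
        ring

theorem iterate_derivation_C_mul_T (hD : D (T 1) = C c) (a : R) (n : ℤ) (r : ℕ) :
    D^[r] (C a * T n) = C (c ^ r * (descPochhammer R r).eval (n : R) * a) * T (n - r) := by
  induction r with
  | zero => simp
  | succ r ih =>
    rw [Function.iterate_succ_apply', ih, ← smul_eq_C_mul, D.map_smul, derivation_T hD,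
      smul_eq_C_mul, ← mul_assoc, ← map_mul, descPochhammer_succ_eval]
    congr 2
    · push_cast; ring
    · push_cast; ring

variable (c D) in
/-- The operator `D_k`, for any derivation `D` and any `c` in the base ring; it is the paper's when
`D (T 1) = C c`. The degenerate `D_0` is `0`. -/
noncomputable def besselOperator (k : ℕ) : R[T;T⁻¹] →ₗ[R] R[T;T⁻¹] :=
  (-1 : R) ^ (k * (k + 1) / 2) • ∑ j ∈ range k, (besselCoeff (k - 1) j * (-c) ^ j : R) •
    (LinearMap.mulLeft R (T (-(k + j))) ∘ₗ (D : R[T;T⁻¹] →ₗ[R] R[T;T⁻¹]) ^ (k - j))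

theorem besselOperator_apply (k : ℕ) (f : R[T;T⁻¹]) :
    besselOperator c D k f = (-1 : R) ^ (k * (k + 1) / 2) • ∑ j ∈ range k,
      (besselCoeff (k - 1) j * (-c) ^ j : R) • (T (-(k + j)) * D^[k - j] f) := by
  simp [besselOperator, Module.End.pow_apply]

theorem besselOperator_algebraMap_apply {K : Type*} [Field K] [CharZero K] [Algebra K R] (c : K)
    (k : ℕ) (f : R[T;T⁻¹]) :
    besselOperator (algebraMap K R c) D k f = (-1 : K) ^ (k * (k + 1) / 2) •
      ∑ j ∈ range k, (((k - 1 + j)! / (2 ^ j * (k - 1 - j)! * j !) : K) * (-c) ^ j) •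
        (T (-(k + j)) * D^[k - j] f) := by
  rw [besselOperator_apply, ← algebraMap_smul R ((-1 : K) ^ _)]
  congr 1
  · simp
  · refine sum_congr rfl fun j hj ↦ ?_
    rw [← cast_besselCoeff (by grind), ← algebraMap_smul R (_ * _ : K)]
    simp

theorem besselOperator_C_mul_T (hD : D (T 1) = C c) {k : ℕ} (hk : 1 ≤ k) (a : R) (n : ℤ) :
    besselOperator c D k (C a * T n) =
      C ((-1) ^ (k * (k + 1) / 2) * c ^ k * (∏ l ∈ range k, (n - 2 * l : R)) * a) *
        T (n - 2 * k) := by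
  obtain ⟨k, rfl⟩ := Nat.exists_eq_add_of_le' hk
  simp only [besselOperator_apply, iterate_derivation_C_mul_T hD,
    ← sum_besselCoeff_mul_descPochhammer_eval, smul_eq_C_mul, mul_sum, sum_mul, map_sum]
  refine sum_congr rfl fun j hj ↦ ?_
  have hj : j ≤ k + 1 := by grind
  have hexp : T (n - 2 * (k + 1 : ℕ)) =
      (T (-((k + 1 : ℕ) + j)) * T (n - (k + 1 - j : ℕ)) : R[T;T⁻¹]) := by
    rw [← T_add]
    congr 1
    push_cast [Nat.cast_sub hj]
    ring
  have hc : c ^ (k + 1) = c ^ j * c ^ (k + 1 - j) := by rw [← pow_add, Nat.add_sub_cancel' hj]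
  rw [hexp, hc, neg_pow c j, Nat.add_sub_cancel]
  simp only [map_mul]
  ring

theorem coeff_besselOperator (hD : D (T 1) = C c) {k : ℕ} (hk : 1 ≤ k) (f : R[T;T⁻¹]) (n : ℤ) :
    (besselOperator c D k f).coeff (n - 2 * k) =
      (-1) ^ (k * (k + 1) / 2) * c ^ k * (∏ l ∈ range k, (n - 2 * l : R)) * f.coeff n := by
  induction f using LaurentPolynomial.induction_on' with
  | add f g hf hg =>
    simp only [map_add, AddMonoidAlgebra.coeff_add, Finsupp.add_apply, hf, hg, mul_add]
  | C_mul_T m a =>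
    rw [besselOperator_C_mul_T hD hk, coeff_C_mul_T, coeff_C_mul_T]
    simp only [sub_left_inj]
    split_ifs with h
    · rw [h]
    · rw [mul_zero]

theorem prod_odd_sub_two_mul_mem_nonZeroDivisors {k i : ℕ}
    (hodd : ∀ j : ℕ, Odd j → j < 2 * k → (j : R) ∈ R⁰) (hi : Odd i) (hik : i < 2 * k) :
    ∏ l ∈ range k, (i - 2 * l : R) ∈ R⁰ := by
  refine prod_mem fun l hl ↦ ?_
  have hnat : (((i - 2 * l : ℤ).natAbs : ℕ) : R) ∈ R⁰ := hodd _ (by grind) (by grind)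
  rw [← Int.cast_natCast] at hnat
  obtain h | h := Int.natAbs_eq (i - 2 * l : ℤ)
  · rw [← h] at hnat
    exact_mod_cast hnat
  · rw [← neg_eq_iff_eq_neg.mpr h] at hnat
    simpa using mul_mem (isUnit_one.neg.mem_nonZeroDivisors (M₀ := R)) hnat

theorem prod_even_sub_two_mul_eq_zero {k i : ℕ} (hi : Even i) (hik : i < 2 * k) :
    ∏ l ∈ range k, (i - 2 * l : R) = 0 := by
  obtain ⟨q, rfl⟩ := hi.exists_two_nsmul
  exact prod_eq_zero (mem_range.mpr (show q < k by grind)) (by simp)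

theorem exists_toLaurent_eq_besselOperator_iff (hc : c ∈ R⁰) (hD : D (T 1) = C c) {k : ℕ}
    (hk : 1 ≤ k) (hodd : ∀ j : ℕ, Odd j → j < 2 * k → (j : R) ∈ R⁰) (p : R[X]) :
    (∃ f : R[X], toLaurent f = besselOperator c D k (toLaurent p)) ↔
      ∀ j, Odd j → j < 2 * k → p.coeff j = 0 := by
  have hcoeff (i : ℕ) : (besselOperator c D k (toLaurent p)).coeff (i - 2 * k) =
      (-1) ^ (k * (k + 1) / 2) * c ^ k * (∏ l ∈ range k, (i - 2 * l : R)) * p.coeff i := by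
    rw [coeff_besselOperator hD hk, coeff_toLaurent_natCast, Int.cast_natCast]
  rw [exists_toLaurent_eq_iff_forall_coeff_neg]
  constructor
  · intro h i hi hik
    have hscalar : (-1) ^ (k * (k + 1) / 2) * c ^ k * ∏ l ∈ range k, (i - 2 * l : R) ∈ R⁰ :=
      mul_mem (mul_mem (isUnit_one.neg.pow _).mem_nonZeroDivisors (pow_mem hc k))
        (prod_odd_sub_two_mul_mem_nonZeroDivisors hodd hi hik)
    rw [← mul_left_mem_nonZeroDivisors_eq_zero_iff hscalar, ← hcoeff]
    exact h _ (by omega)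
  · intro h n hn
    obtain ⟨i, rfl⟩ : ∃ i : ℤ, n = i - 2 * k := ⟨n + 2 * k, by ring⟩
    obtain hi | hi := lt_or_ge i 0
    · rw [coeff_besselOperator hD hk, coeff_toLaurent_of_neg p hi, mul_zero]
    lift i to ℕ using hi
    have hik : i < 2 * k := by omega
    rw [hcoeff]
    obtain hi | hi := i.even_or_odd
    · rw [prod_even_sub_two_mul_eq_zero hi hik, mul_zero, zero_mul]
    · rw [h i hi hik, mul_zero]

theorem natCast_mem_nonZeroDivisors_of_charZero_algebra (K : Type*) [Field K] [CharZero K]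
    [Algebra K R] {j : ℕ} (hj : j ≠ 0) : (j : R) ∈ R⁰ := by
  have hunit : IsUnit (algebraMap K R j) := (Nat.cast_ne_zero.mpr hj).isUnit.map _
  simpa only [map_natCast] using hunit.mem_nonZeroDivisors

theorem exists_coeff_eq_and_toLaurent_eq_sum {N : ℕ} {a : ℕ → R} (ha : ∀ j, N < j → a j = 0) :
    ∃ p : R[X], (∀ j, p.coeff j = a j) ∧
      toLaurent p = ∑ i ∈ range (N + 1), C (a i) * T (i : ℤ) := by
  refine ⟨∑ i ∈ range (N + 1), Polynomial.C (a i) * Polynomial.X ^ i, fun j ↦ ?_, ?_⟩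
  · simp only [Polynomial.finsetSum_coeff, Polynomial.coeff_C_mul_X_pow, sum_ite_eq, mem_range]
    grind
  · simp only [map_sum, Polynomial.toLaurent_C_mul_X_pow]

theorem stmt_10_general (hc : c ∈ R⁰) (hD : D (T 1) = C c) {m : ℕ}
    (hodd : ∀ j : ℕ, Odd j → j < 2 * m → (j : R) ∈ R⁰) (p : R[X]) :
    (∀ k, 1 ≤ k → k ≤ m → ∃ f : R[X], toLaurent f = besselOperator c D k (toLaurent p)) ↔
      ∀ j, Odd j → 1 ≤ j → j ≤ 2 * m - 1 → p.coeff j = 0 := by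
  have single {k : ℕ} (hk : 1 ≤ k) (hkm : k ≤ m) :=
    exists_toLaurent_eq_besselOperator_iff hc hD hk (fun j hj hjk ↦ hodd j hj (by omega)) p
  constructor
  · intro h j hj hj1 hjm
    exact (single (by omega) le_rfl).mp (h m (by omega) le_rfl) j hj (by omega)
  · intro h k hk hkm
    exact (single hk hkm).mpr fun j hj hjk ↦ h j hj hj.pos (by omega)

end

/-- Proposition (commondom).  Let `R` be a commutative unital ℂ-algebra, `c ∈ ℂ`
nonzero, `D` the `R`-derivation of `R[λ,λ⁻¹]` with `D λ = c`.  For `1 ≤ k ≤ m` let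
`D_k = (-1)^{k(k+1)/2} ∑_{j=0}^{k-1} ((k-1+j)!/(2^j (k-1-j)! j!)) (-c)^j λ^{-(k+j)} D^{k-j}`.
Then for `p = ∑_{j=0}^N a_j λ^j ∈ R[λ]`, `D_k p ∈ R[λ]` for all `k = 1,…,m` iff
`a_j = 0` for all odd `j` with `1 ≤ j ≤ 2m-1`. -/
theorem stmt_10 {R : Type*} [CommRing R] [Algebra ℂ R] (c : ℂ) (hc : c ≠ 0)
    (D : Derivation R (LaurentPolynomial R) (LaurentPolynomial R))
    (hD : D (LaurentPolynomial.T 1) = algebraMap ℂ (LaurentPolynomial R) c)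
    (m N : ℕ) (hm : 1 ≤ m) (a : ℕ → R) (ha : ∀ j, N < j → a j = 0) :
    (∀ k, 1 ≤ k → k ≤ m →
      ∃ f : Polynomial R, Polynomial.toLaurent f =
        ((-1 : ℂ) ^ (k * (k + 1) / 2)) •
          ∑ j ∈ Finset.range k,
            (((Nat.factorial (k - 1 + j) : ℂ) /
                (2 ^ j * (Nat.factorial (k - 1 - j) : ℂ) * (Nat.factorial j : ℂ))) *
              (-c) ^ j) •
              (LaurentPolynomial.T (-((k : ℤ) + (j : ℤ))) *
                (⇑D)^[k - j] (∑ i ∈ Finset.range (N + 1),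
                  LaurentPolynomial.C (a i) * LaurentPolynomial.T (i : ℤ))))
    ↔ (∀ j, Odd j → 1 ≤ j → j ≤ 2 * m - 1 → a j = 0) := by
  obtain ⟨p, hcoeff, hsum⟩ := exists_coeff_eq_and_toLaurent_eq_sum ha
  simpa only [besselOperator_algebraMap_apply, hcoeff, hsum] using
    stmt_10_general (hc.isUnit.map (algebraMap ℂ R)).mem_nonZeroDivisors hD (m := m)
      (fun j hj _ ↦ natCast_mem_nonZeroDivisors_of_charZero_algebra ℂ hj.pos.ne') p
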